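/- Let a, b, c ∈ ℂ[x₀, x₁, x₂, x₃] be homogeneous polynomials with 2·(deg b) = deg a + deg c, and set F = b² − 4·a·c (so F is homogeneous). Let p ∈ ℂ⁴ be a nonzero point with a(p) = b(p) = c(p) = 0, and suppose that the three gradient vectors ((∂a/∂x_i)(p))_{i}, ((∂b/∂x_i)(p))_{i}, ((∂c/∂x_i)(p))_{i} are linearly independent over ℂ. Then all four first-order partial derivatives of F vanish at p, and the 4×4 Hessian matrix ((∂²F/∂x_i∂x_j)(p))_{0 ≤ i, j ≤ 3} has rank exactly 3; hence the point [p] ∈ ℙ³ is an ordinary double point of the surface {F = 0}. -/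

import Mathlib

/-!
The polynomial `b ^ 2 - 4 * a * c` is the pullback of the ternary quadratic form
`q = y ^ 2 - 4 * x * z` along the map `f = (a, b, c)`. By the chain rule, a critical point of `q`
at `f p` gives a critical point of `q ∘ f` at `p`, where the Hessian is `Jᵀ * H * J` with `H` the
Hessian of `q` and `J` the Jacobian matrix of `f`. The origin is a critical point of `q` with
`det H = -32`, and multiplying by a matrix `J` with independent rows and by its transpose preserves
the rank, so the Hessian at `p` has rank `3`.
-/

open MvPolynomial

section Rank

open Matrix

variable {l m n : Type*} [Fintype m] [Fintype n]

theorem rank_mul_eq_right_of_mulVec_injective {R : Type*} [CommSemiring R] {B : Matrix l m R}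
    (hB : Function.Injective B.mulVec) (A : Matrix m n R) : (B * A).rank = A.rank := by
  rw [rank, rank, mulVecLin_mul, LinearMap.range_comp]
  exact (Submodule.equivMapOfInjective B.mulVecLin hB _).finrank_eq.symm

theorem rank_transpose_mul_mul_of_linearIndependent_row {K : Type*} [Field K] {G : Matrix m n K}
    (hG : LinearIndependent K G.row) (A : Matrix m m K) : (Gᵀ * A * G).rank = A.rank := by
  have hinj : Function.Injective Gᵀ.mulVec := mulVec_injective_iff.2 hG
  calc (Gᵀ * A * G).rank
    _ = (A * G).rank := by rw [Matrix.mul_assoc, rank_mul_eq_right_of_mulVec_injective hinj]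
    _ = (Gᵀ * Aᵀ).rank := by rw [← transpose_mul, rank_transpose]
    _ = A.rank := by rw [rank_mul_eq_right_of_mulVec_injective hinj, rank_transpose]

end Rank

section ChainRule

open Matrix

theorem derivation_aeval {R A M ι : Type*} [CommSemiring R] [CommSemiring A] [Algebra R A]
    [AddCommMonoid M] [Module R M] [Module A M] [Fintype ι]
    (D : Derivation R A M) (f : ι → A) (g : MvPolynomial ι R) :
    D (aeval f g) = ∑ k, aeval f (pderiv k g) • D (f k) := by
  classical
  induction g using MvPolynomial.induction_on with
  | C r => simp
  | add g h hg hh => simp [hg, hh, add_smul, Finset.sum_add_distrib]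
  | mul_X g k hg =>
    simp [hg, Pi.single_apply, apply_ite (aeval f), ite_smul, add_smul, mul_smul,
      Finset.sum_add_distrib, Finset.smul_sum]

variable {R σ ι : Type*} [CommSemiring R]

/-- The gradient of the polynomial `f` at the point `p`. -/
noncomputable def gradientAt (p : σ → R) (f : MvPolynomial σ R) : σ → R :=
  fun i => eval p (pderiv i f)

/-- The Jacobian matrix at the point `p` of the polynomial map with components `f k`; its rows are
the gradients of the components. -/
noncomputable def jacobianAt (p : σ → R) (f : ι → MvPolynomial σ R) : Matrix ι σ R :=
  Matrix.of fun k => gradientAt p (f k)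

/-- The Hessian matrix of the polynomial `f` at the point `p`. -/
noncomputable def hessianAt (p : σ → R) (f : MvPolynomial σ R) : Matrix σ σ R :=
  Matrix.of fun i j => eval p (pderiv i (pderiv j f))

theorem eval_bind₁ (p : σ → R) (f : ι → MvPolynomial σ R) (g : MvPolynomial ι R) :
    eval p (bind₁ f g) = eval (fun k => eval p (f k)) g :=
  eval₂Hom_bind₁ _ _ _ _

variable [Fintype ι]

theorem pderiv_bind₁ (f : ι → MvPolynomial σ R) (g : MvPolynomial ι R) (i : σ) :
    pderiv i (bind₁ f g) = ∑ k, bind₁ f (pderiv k g) * pderiv i (f k) :=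
  derivation_aeval (pderiv i) f g

theorem pderiv_pderiv_bind₁ (f : ι → MvPolynomial σ R) (g : MvPolynomial ι R) (i j : σ) :
    pderiv i (pderiv j (bind₁ f g)) =
      ∑ k, ((∑ l, bind₁ f (pderiv l (pderiv k g)) * pderiv i (f l)) * pderiv j (f k) +
        bind₁ f (pderiv k g) * pderiv i (pderiv j (f k))) := by
  simp only [pderiv_bind₁, map_sum, pderiv_mul]

theorem gradientAt_bind₁ (p : σ → R) (f : ι → MvPolynomial σ R) (g : MvPolynomial ι R) :
    gradientAt p (bind₁ f g) = gradientAt (fun k => eval p (f k)) g ᵥ* jacobianAt p f := by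
  ext i
  simp [gradientAt, jacobianAt, vecMul, dotProduct, pderiv_bind₁, eval_bind₁]

theorem hessianAt_bind₁ (p : σ → R) (f : ι → MvPolynomial σ R) (g : MvPolynomial ι R) :
    hessianAt p (bind₁ f g) =
      (jacobianAt p f)ᵀ * hessianAt (fun k => eval p (f k)) g * jacobianAt p f +
        ∑ k, gradientAt (fun k => eval p (f k)) g k • hessianAt p (f k) := by
  ext i j
  simp [hessianAt, gradientAt, jacobianAt, Matrix.mul_apply, Matrix.sum_apply, pderiv_pderiv_bind₁,
    eval_bind₁, Finset.sum_add_distrib, mul_comm (eval p (pderiv i _))]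

theorem rank_hessianAt_bind₁ {K : Type*} [Field K] [Fintype σ] {p : σ → K}
    {f : ι → MvPolynomial σ K} {g : MvPolynomial ι K}
    (hg : gradientAt (fun k => eval p (f k)) g = 0)
    (hf : LinearIndependent K (jacobianAt p f).row) :
    (hessianAt p (bind₁ f g)).rank = (hessianAt (fun k => eval p (f k)) g).rank := by
  simp only [hessianAt_bind₁, hg, Pi.zero_apply, zero_smul, Finset.sum_const_zero, add_zero]
  exact rank_transpose_mul_mul_of_linearIndependent_row hf _

end ChainRule

section DiscriminantForm

/-- The discriminant of the binary quadratic form `X 0 * s ^ 2 + X 1 * s * t + X 2 * t ^ 2`,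
as a polynomial in its three coefficients; `b ^ 2 - 4 * a * c` is its pullback along `(a, b, c)`. -/
noncomputable def discriminantForm (R : Type*) [CommRing R] : MvPolynomial (Fin 3) R :=
  X 1 ^ 2 - 4 * X 0 * X 2

variable {R : Type*} [CommRing R]

theorem bind₁_discriminantForm {σ : Type*} (a b c : MvPolynomial σ R) :
    bind₁ ![a, b, c] (discriminantForm R) = b ^ 2 - 4 * a * c := by
  simp [discriminantForm, map_ofNat]

theorem pderiv_discriminantForm (i : Fin 3) :
    pderiv i (discriminantForm R) = ![-4 * X 2, 2 * X 1, -4 * X 0] i := by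
  have h4 (k : Fin 3) : pderiv k (4 : MvPolynomial (Fin 3) R) = 0 := (pderiv k).map_natCast 4
  fin_cases i <;> simp [discriminantForm, h4, mul_comm]

theorem gradientAt_discriminantForm_zero : gradientAt 0 (discriminantForm R) = 0 := by
  ext i
  fin_cases i <;> simp [gradientAt, pderiv_discriminantForm]

theorem hessianAt_discriminantForm (p : Fin 3 → R) :
    hessianAt p (discriminantForm R) = !![0, 0, -4; 0, 2, 0; -4, 0, 0] := by
  have h2 (i : Fin 3) : pderiv i (2 : MvPolynomial (Fin 3) R) = 0 := (pderiv i).map_natCast 2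
  have h4 (i : Fin 3) : pderiv i (4 : MvPolynomial (Fin 3) R) = 0 := (pderiv i).map_natCast 4
  ext i j
  fin_cases i <;> fin_cases j <;>
    simp [hessianAt, pderiv_discriminantForm, h2, h4]

theorem det_hessianAt_discriminantForm (p : Fin 3 → R) :
    (hessianAt p (discriminantForm R)).det = -2 ^ 5 := by
  simp only [hessianAt_discriminantForm, Matrix.det_fin_three, Matrix.of_apply, Matrix.cons_val]
  norm_num

theorem rank_hessianAt_discriminantForm {K : Type*} [Field K] [NeZero (2 : K)] (p : Fin 3 → K) :
    (hessianAt p (discriminantForm K)).rank = 3 := by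
  have hdet : (hessianAt p (discriminantForm K)).det ≠ 0 := by
    rw [det_hessianAt_discriminantForm]
    exact neg_ne_zero.2 (pow_ne_zero 5 two_ne_zero)
  rw [Matrix.rank_of_det_ne_zero hdet, Fintype.card_fin]

end DiscriminantForm

theorem discriminant_surface_ordinary_double_point_general {K σ : Type*} [Field K]
    [NeZero (2 : K)] [Fintype σ] {a b c : MvPolynomial σ K} {p : σ → K}
    (ha : eval p a = 0) (hb : eval p b = 0) (hc : eval p c = 0)
    (hind : LinearIndependent K ![gradientAt p a, gradientAt p b, gradientAt p c]) :
    gradientAt p (b ^ 2 - 4 * a * c) = 0 ∧ (hessianAt p (b ^ 2 - 4 * a * c)).rank = 3 := by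
  have hzero : (fun k => eval p (![a, b, c] k)) = 0 := by
    ext k
    fin_cases k <;> assumption
  have hcrit : gradientAt (fun k => eval p (![a, b, c] k)) (discriminantForm K) = 0 := by
    rw [hzero, gradientAt_discriminantForm_zero]
  have hrow : (jacobianAt p ![a, b, c]).row =
      ![gradientAt p a, gradientAt p b, gradientAt p c] := by
    ext k : 1
    fin_cases k <;> rfl
  rw [← bind₁_discriminantForm]
  constructor
  · rw [gradientAt_bind₁, hcrit, Matrix.zero_vecMul]
  · rw [rank_hessianAt_bind₁ hcrit (hrow ▸ hind), rank_hessianAt_discriminantForm]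

/-- If `a`, `b`, `c` are homogeneous polynomials in four variables with
`2 deg b = deg a + deg c`, and `p ≠ 0` is a common zero of `a`, `b`, `c` at which the
three gradients are linearly independent, then all first partials of
`F = b² − 4ac` vanish at `p` and the Hessian of `F` at `p` has rank exactly `3`;
hence `[p] ∈ ℙ³` is an ordinary double point of the surface `{F = 0}`. -/
theorem discriminant_surface_ordinary_double_point
    (a b c : MvPolynomial (Fin 4) ℂ) (da db dc : ℕ)
    (ha : a.IsHomogeneous da) (hb : b.IsHomogeneous db) (hc : c.IsHomogeneous dc)
    (hdeg : 2 * db = da + dc)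
    (p : Fin 4 → ℂ) (hp : p ≠ 0)
    (hap : eval p a = 0) (hbp : eval p b = 0) (hcp : eval p c = 0)
    (hind : LinearIndependent ℂ
      ![fun i => eval p (pderiv i a),
        fun i => eval p (pderiv i b),
        fun i => eval p (pderiv i c)]) :
    (∀ i, eval p (pderiv i (b ^ 2 - 4 * a * c)) = 0) ∧
    (Matrix.of fun i j : Fin 4 =>
        eval p (pderiv i (pderiv j (b ^ 2 - 4 * a * c)))).rank = 3 := by
  have h := discriminant_surface_ordinary_double_point_general hap hbp hcp hind
  exact ⟨congrFun h.1, h.2⟩
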